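/- Let T > 0 and m₀ ∈ (0,1]. For t ∈ [0,T] and m ∈ [−1,1], let M(t,m) be defined as follows: for m > 0, M(t,m) is the unique positive solution of t²M³ + t(2−t)M² + (1−2t)M = m; M(t,0) = 0; and M(t,m) = −M(t,−m) for m < 0. Define Z(t,m) = 2M(t,m)/(t|M(t,m)| + 1). Then the initial value problem m′(t) = −m(t)|Z(T−t, m(t))| + Z(T−t, m(t)), m(0) = m₀, admits a unique differentiable solution m : [0,T] → [−1,1]; this solution satisfies m(t) ≥ m₀ > 0 for all t ∈ [0,T]. -/

import Mathlib

/-!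
Write `F t x = 1 - (1 - x) * (1 + t * x) ^ 2` for the left-hand side of the consistency equation.
The root `x` of `F t x = m` is the value transported by the characteristic through `(t, m)`. In
terms of this root the drift is a polynomial: `-m * |Z| + Z = 2 * x * (1 - x) * (1 + t * x)`, which
is exactly `-∂ₜ F t x`. Hence, with `p = M T m₀`, the curve `t ↦ F (T - t) p` solves the equation.

As `F t 0 = 0` and the difference quotient of `F t` starting at a positive root `y` is at least
`F t y / y ≥ F t y`, the root is Lipschitz in `m` on `[m₀, 1]`, and so is the drift. Any solution
starting at `m₀` is nondecreasing as long as it is positive, so it stays in `[m₀, 1]`, where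
Grönwall's inequality gives uniqueness.
-/

open Set

section RightDerivative

variable {f : ℝ → ℝ} {a b : ℝ}

lemma hasDerivWithinAt_Ici_of_Icc {f' x : ℝ} (h : HasDerivWithinAt f f' (Icc a b) x)
    (hx : x ∈ Ico a b) : HasDerivWithinAt f f' (Ici x) x :=
  h.mono_of_mem_nhdsWithin <|
    Filter.mem_of_superset (Icc_mem_nhdsGE hx.2) (Icc_subset_Icc_left hx.1)

-- Fence `f` from below by lines of slope `-ε`, with `ε` so small that they stay above `c`.
lemma image_left_le_of_deriv_right_nonneg_of_lt {f' : ℝ → ℝ} {c : ℝ}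
    (hf : ContinuousOn f (Icc a b)) (hf' : ∀ x ∈ Ico a b, HasDerivWithinAt f (f' x) (Ici x) x)
    (hca : c < f a) (hnonneg : ∀ x ∈ Ico a b, c < f x → 0 ≤ f' x) {x : ℝ} (hx : x ∈ Icc a b) :
    f a ≤ f x := by
  by_contra! hlt
  obtain ⟨ε, hε, hεb⟩ := exists_pos_mul_lt (sub_pos.2 (max_lt hca hlt)) (b - a)
  have above_max : ∀ y ∈ Icc a b, max c (f x) < f a - ε * (y - a) := fun y hy => by
    nlinarith [mul_le_mul_of_nonneg_left (sub_le_sub_right hy.2 a) hε.le]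
  have fence : -f x ≤ ε * (x - a) - f a := by
    refine image_le_of_deriv_right_lt_deriv_boundary (B := fun y => ε * (y - a) - f a)
      (B' := fun _ => ε) hf.neg (fun y hy => (hf' y hy).neg) (by simp)
      (fun y => ?_) (fun y hy hmeet => ?_) hx
    · simpa using (((hasDerivAt_id y).sub_const a).const_mul ε).sub_const (f a)
    · have hcy : c < f y := by
        have hmeet : -f y = ε * (y - a) - f a := hmeet
        linarith [(le_max_left c (f x)).trans_lt (above_max y (Ico_subset_Icc_self hy))]
      linarith [hnonneg y hy hcy]
  linarith [(le_max_right c (f x)).trans_lt (above_max x hx)]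

end RightDerivative

/-- The left-hand side of the consistency equation, factored so that `consistencyMap t 1 = 1` is
visible. As a function of `t` it is the characteristic carrying the root `x`. -/
def consistencyMap (t x : ℝ) : ℝ := 1 - (1 - x) * (1 + t * x) ^ 2

/-- The value `-∂ₜ (consistencyMap t x)`: the speed, in forward time, of the state along the
characteristic carrying the root `x`, when the time to go is `t`. -/
def characteristicSpeed (t x : ℝ) : ℝ := 2 * x * (1 - x) * (1 + t * x)

section ConsistencyMap

variable {t x y : ℝ}

lemma consistencyMap_eq_cubic (t x : ℝ) :
    consistencyMap t x = t ^ 2 * x ^ 3 + t * (2 - t) * x ^ 2 + (1 - 2 * t) * x := by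
  unfold consistencyMap; ring

lemma consistencyMap_le_one (hx : x ≤ 1) : consistencyMap t x ≤ 1 :=
  sub_le_self _ (mul_nonneg (sub_nonneg.2 hx) (sq_nonneg _))

lemma le_one_of_consistencyMap_le_one (ht : 0 ≤ t) (hx : 0 ≤ x) (h : consistencyMap t x ≤ 1) :
    x ≤ 1 :=
  sub_nonneg.1 <| nonneg_of_mul_nonneg_left (by simpa [consistencyMap] using h)
    (by positivity : 0 < (1 + t * x) ^ 2)

lemma hasDerivAt_consistencyMap_left (t x : ℝ) :
    HasDerivAt (consistencyMap · x) (-characteristicSpeed t x) t := by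
  have h := (((((hasDerivAt_id t).mul_const x).const_add 1).pow 2).const_mul (1 - x)).const_sub 1
  refine h.congr_deriv ?_
  simp only [characteristicSpeed, id_eq]
  ring

lemma characteristicSpeed_nonneg (ht : 0 ≤ t) (hx : x ∈ Icc (0 : ℝ) 1) :
    0 ≤ characteristicSpeed t x := by
  have := hx.1
  have := sub_nonneg.2 hx.2
  unfold characteristicSpeed; positivity

lemma antitoneOn_consistencyMap_left (hx : x ∈ Icc (0 : ℝ) 1) :
    AntitoneOn (consistencyMap · x) (Ici 0) :=
  antitoneOn_of_hasDerivWithinAt_nonpos (convex_Ici 0)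
    (fun t _ => (hasDerivAt_consistencyMap_left t x).continuousAt.continuousWithinAt)
    (fun t _ => (hasDerivAt_consistencyMap_left t x).hasDerivWithinAt)
    (fun _ ht => neg_nonpos.2 (characteristicSpeed_nonneg (interior_subset ht) hx))

lemma two_mul_mul_one_sub_lt_one (ht : 0 ≤ t) (hx : 0 < x) (hF : 0 < consistencyMap t x) :
    2 * t * (1 - x) < 1 := by
  have factor_x : consistencyMap t x = x * (1 - t * (1 - x) * (2 + t * x)) := by
    unfold consistencyMap; ring
  have hlt : t * (1 - x) * (2 + t * x) < 1 :=
    sub_pos.1 (pos_of_mul_pos_right (factor_x ▸ hF) hx.le)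
  rcases le_total x 1 with hx1 | hx1
  · nlinarith [mul_nonneg (mul_nonneg ht (sub_nonneg.2 hx1)) (mul_nonneg ht hx.le)]
  · nlinarith [mul_nonneg ht (sub_nonneg.2 hx1)]

lemma consistencyMap_mul_sub_le (ht : 0 ≤ t) (hy : y ∈ Ioc (0 : ℝ) 1) (hyx : y ≤ x)
    (hF : 0 < consistencyMap t y) :
    consistencyMap t y * (x - y) ≤ consistencyMap t x - consistencyMap t y := by
  obtain ⟨hy0, hy1⟩ := hy
  have hx0 : 0 < x := hy0.trans_le hyx
  have secant_slope : consistencyMap t x - consistencyMap t y =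
      (consistencyMap t y / y + t * x * (t * x + (2 - t * (1 - y)))) * (x - y) := by
    unfold consistencyMap; field_simp; ring
  have slope_ge : consistencyMap t y ≤ consistencyMap t y / y := le_div_self hF.le hy0 hy1
  have : 0 ≤ 2 - t * (1 - y) := by linarith [two_mul_mul_one_sub_lt_one ht hy0 hF]
  have : 0 ≤ t * x * (t * x + (2 - t * (1 - y))) := by positivity
  rw [secant_slope]
  exact mul_le_mul_of_nonneg_right (by linarith) (sub_nonneg.2 hyx)

lemma mul_abs_sub_le_abs_consistencyMap_sub {c : ℝ} (hc : 0 < c) (ht : 0 ≤ t)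
    (hx : x ∈ Ioc (0 : ℝ) 1) (hy : y ∈ Ioc (0 : ℝ) 1)
    (hFx : c ≤ consistencyMap t x) (hFy : c ≤ consistencyMap t y) :
    c * |x - y| ≤ |consistencyMap t x - consistencyMap t y| := by
  wlog hyx : y ≤ x generalizing x y
  · rw [abs_sub_comm x, abs_sub_comm (consistencyMap t x)]
    exact this hy hx hFy hFx (le_of_not_ge hyx)
  rw [abs_of_nonneg (sub_nonneg.2 hyx)]
  calc c * (x - y) ≤ consistencyMap t y * (x - y) :=
        mul_le_mul_of_nonneg_right hFy (sub_nonneg.2 hyx)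
    _ ≤ consistencyMap t x - consistencyMap t y :=
        consistencyMap_mul_sub_le ht hy hyx (hc.trans_le hFy)
    _ ≤ |consistencyMap t x - consistencyMap t y| := le_abs_self _

lemma injOn_consistencyMap (ht : 0 ≤ t) :
    InjOn (consistencyMap t) {x | x ∈ Ioc (0 : ℝ) 1 ∧ 0 < consistencyMap t x} := by
  rintro x ⟨hx, hFx⟩ y ⟨hy, -⟩ hxy
  have h := mul_abs_sub_le_abs_consistencyMap_sub hFx ht hx hy le_rfl hxy.le
  rw [hxy, sub_self, abs_zero] at h
  exact sub_eq_zero.1 (abs_nonpos_iff.1 (nonpos_of_mul_nonpos_right h (hxy ▸ hFx)))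

lemma abs_characteristicSpeed_sub_le (ht : 0 ≤ t) (hx : x ∈ Icc (0 : ℝ) 1)
    (hy : y ∈ Icc (0 : ℝ) 1) :
    |characteristicSpeed t x - characteristicSpeed t y| ≤ 2 * (1 + t) * |x - y| := by
  obtain ⟨hx0, hx1⟩ := hx
  obtain ⟨hy0, hy1⟩ := hy
  have secant_slope : characteristicSpeed t x - characteristicSpeed t y =
      2 * ((1 - (x + y)) + t * (x * (1 - x) + y * (1 - y) - x * y)) * (x - y) := by
    unfold characteristicSpeed; ring
  have linear_part : |1 - (x + y)| ≤ 1 := abs_le.2 ⟨by linarith, by linarith⟩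
  have quadratic_part : |x * (1 - x) + y * (1 - y) - x * y| ≤ 1 :=
    abs_le.2 ⟨by nlinarith, by nlinarith [sq_nonneg (1 - 2 * x), sq_nonneg (1 - 2 * y)]⟩
  rw [secant_slope, abs_mul, abs_mul, abs_two]
  gcongr
  calc |(1 - (x + y)) + t * (x * (1 - x) + y * (1 - y) - x * y)|
      ≤ |1 - (x + y)| + t * |x * (1 - x) + y * (1 - y) - x * y| :=
        (abs_add_le _ _).trans_eq (by rw [abs_mul, abs_of_nonneg ht])
    _ ≤ 1 + t * 1 := by gcongr
    _ = 1 + t := by rw [mul_one]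

end ConsistencyMap

/-- The entropy solution `Z(t,m)` of the master equation, in terms of the root function `M`. -/
noncomputable def entropySolution (M : ℝ → ℝ → ℝ) (t m : ℝ) : ℝ :=
  2 * M t m / (t * |M t m| + 1)

/-- The right-hand side of the mean field equation in state `m`, with `t` the time to go. -/
noncomputable def meanFieldDrift (M : ℝ → ℝ → ℝ) (t m : ℝ) : ℝ :=
  -m * |entropySolution M t m| + entropySolution M t m

/-- `M` selects positive roots of the consistency equation on the horizon `[0, T]`. Only states in
`(0, 1]` are constrained, since solutions starting there never leave this interval. -/
def IsPositiveRootBranch (T : ℝ) (M : ℝ → ℝ → ℝ) : Prop :=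
  ∀ t ∈ Icc 0 T, ∀ m ∈ Ioc (0 : ℝ) 1, 0 < M t m ∧ consistencyMap t (M t m) = m

namespace IsPositiveRootBranch

variable {T t m p m₀ : ℝ} {M : ℝ → ℝ → ℝ} {w : ℝ → ℝ}

lemma apply_mem_Ioc (hM : IsPositiveRootBranch T M) (ht : t ∈ Icc 0 T) (hm : m ∈ Ioc (0 : ℝ) 1) :
    M t m ∈ Ioc (0 : ℝ) 1 := by
  obtain ⟨hpos, hroot⟩ := hM t ht m hm
  exact ⟨hpos, le_one_of_consistencyMap_le_one ht.1 hpos.le (hroot.trans_le hm.2)⟩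

lemma apply_consistencyMap (hM : IsPositiveRootBranch T M) (ht : t ∈ Icc 0 T)
    (hp : p ∈ Ioc (0 : ℝ) 1) (hF : 0 < consistencyMap t p) : M t (consistencyMap t p) = p := by
  have hm : consistencyMap t p ∈ Ioc (0 : ℝ) 1 := ⟨hF, consistencyMap_le_one hp.2⟩
  have hroot := (hM t ht _ hm).2
  exact injOn_consistencyMap ht.1 ⟨hM.apply_mem_Ioc ht hm, hroot.symm ▸ hF⟩ ⟨hp, hF⟩ hroot

lemma meanFieldDrift_eq (hM : IsPositiveRootBranch T M) (ht : t ∈ Icc 0 T)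
    (hm : m ∈ Ioc (0 : ℝ) 1) : meanFieldDrift M t m = characteristicSpeed t (M t m) := by
  obtain ⟨hpos, hroot⟩ := hM t ht m hm
  have hden : 0 < t * M t m + 1 := by linarith [mul_nonneg ht.1 hpos.le]
  have hZ : 0 ≤ 2 * M t m / (t * M t m + 1) := by positivity
  have hm_eq : 1 - m = (1 - M t m) * (t * M t m + 1) ^ 2 := by
    rw [consistencyMap] at hroot
    linear_combination hroot
  calc meanFieldDrift M t m = (1 - m) * (2 * M t m / (t * M t m + 1)) := by
        rw [meanFieldDrift, entropySolution, abs_of_pos hpos, abs_of_nonneg hZ]; ring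
    _ = characteristicSpeed t (M t m) := by
        rw [hm_eq, characteristicSpeed]; field_simp; ring

lemma meanFieldDrift_nonneg (hM : IsPositiveRootBranch T M) (ht : t ∈ Icc 0 T)
    (hm : m ∈ Ioc (0 : ℝ) 1) : 0 ≤ meanFieldDrift M t m :=
  hM.meanFieldDrift_eq ht hm ▸
    characteristicSpeed_nonneg ht.1 (Ioc_subset_Icc_self (hM.apply_mem_Ioc ht hm))

lemma abs_apply_sub_le (hM : IsPositiveRootBranch T M) (ht : t ∈ Icc 0 T) {c x y : ℝ} (hc : 0 < c)
    (hx : x ∈ Icc c 1) (hy : y ∈ Icc c 1) : |M t x - M t y| ≤ |x - y| / c := by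
  have hx' : x ∈ Ioc (0 : ℝ) 1 := ⟨hc.trans_le hx.1, hx.2⟩
  have hy' : y ∈ Ioc (0 : ℝ) 1 := ⟨hc.trans_le hy.1, hy.2⟩
  have hroot_x := (hM t ht x hx').2
  have hroot_y := (hM t ht y hy').2
  have h := mul_abs_sub_le_abs_consistencyMap_sub hc ht.1
    (hM.apply_mem_Ioc ht hx') (hM.apply_mem_Ioc ht hy')
    (hx.1.trans_eq hroot_x.symm) (hy.1.trans_eq hroot_y.symm)
  rw [hroot_x, hroot_y] at h
  exact (le_div_iff₀' hc).2 h

lemma lipschitzOnWith_meanFieldDrift (hM : IsPositiveRootBranch T M) (ht : t ∈ Icc 0 T) {c : ℝ}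
    (hc : 0 < c) :
    LipschitzOnWith (2 * (1 + T) / c).toNNReal (meanFieldDrift M t) (Icc c 1) := by
  have subset_Ioc : Icc c 1 ⊆ Ioc 0 1 := fun x hx => ⟨hc.trans_le hx.1, hx.2⟩
  have hT : 0 ≤ T := ht.1.trans ht.2
  refine LipschitzOnWith.of_dist_le' fun x hx y hy => ?_
  have mem_Icc {z : ℝ} (hz : z ∈ Icc c 1) : M t z ∈ Icc (0 : ℝ) 1 :=
    Ioc_subset_Icc_self (hM.apply_mem_Ioc ht (subset_Ioc hz))
  rw [Real.dist_eq, Real.dist_eq, hM.meanFieldDrift_eq ht (subset_Ioc hx),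
    hM.meanFieldDrift_eq ht (subset_Ioc hy)]
  calc |characteristicSpeed t (M t x) - characteristicSpeed t (M t y)|
      ≤ 2 * (1 + t) * |M t x - M t y| :=
        abs_characteristicSpeed_sub_le ht.1 (mem_Icc hx) (mem_Icc hy)
    _ ≤ 2 * (1 + T) * (|x - y| / c) := by
        gcongr
        exacts [ht.2, hM.abs_apply_sub_le ht hc hx hy]
    _ = 2 * (1 + T) / c * |x - y| := by ring

lemma hasDerivAt_characteristic (hM : IsPositiveRootBranch T M) (ht : t ∈ Icc 0 T)
    (hp : p ∈ Ioc (0 : ℝ) 1) (hF : 0 < consistencyMap (T - t) p) :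
    HasDerivAt (fun s => consistencyMap (T - s) p)
      (meanFieldDrift M (T - t) (consistencyMap (T - t) p)) t := by
  have ht' : T - t ∈ Icc 0 T := sub_mem_Icc_zero_iff_right.2 ht
  rw [hM.meanFieldDrift_eq ht' ⟨hF, consistencyMap_le_one hp.2⟩, hM.apply_consistencyMap ht' hp hF]
  simpa using (hasDerivAt_consistencyMap_left (T - t) p).comp_const_sub T t

lemma initial_le_of_hasDerivWithinAt (hM : IsPositiveRootBranch T M)
    (hw : ∀ t ∈ Icc 0 T, HasDerivWithinAt w (meanFieldDrift M (T - t) (w t)) (Icc 0 T) t)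
    (hw0 : 0 < w 0) (hw1 : ∀ t ∈ Icc 0 T, w t ≤ 1) (ht : t ∈ Icc 0 T) : w 0 ≤ w t :=
  image_left_le_of_deriv_right_nonneg_of_lt (HasDerivWithinAt.continuousOn hw)
    (fun s hs => hasDerivWithinAt_Ici_of_Icc (hw s (Ico_subset_Icc_self hs)) hs) hw0
    (fun s hs hpos => hM.meanFieldDrift_nonneg
      (sub_mem_Icc_zero_iff_right.2 (Ico_subset_Icc_self hs))
      ⟨hpos, hw1 s (Ico_subset_Icc_self hs)⟩) ht

lemma eqOn_of_hasDerivWithinAt {v : ℝ → ℝ} (hM : IsPositiveRootBranch T M)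
    (hv : ∀ t ∈ Icc 0 T, HasDerivWithinAt v (meanFieldDrift M (T - t) (v t)) (Icc 0 T) t)
    (hw : ∀ t ∈ Icc 0 T, HasDerivWithinAt w (meanFieldDrift M (T - t) (w t)) (Icc 0 T) t)
    (hv1 : ∀ t ∈ Icc 0 T, v t ≤ 1) (hw1 : ∀ t ∈ Icc 0 T, w t ≤ 1)
    (hv0 : 0 < v 0) (hvw : v 0 = w 0) : EqOn v w (Icc 0 T) := by
  refine ODE_solution_unique_of_mem_Icc_right (v := fun t => meanFieldDrift M (T - t))
    (s := fun _ => Icc (v 0) 1)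
    (fun t ht => hM.lipschitzOnWith_meanFieldDrift
      (sub_mem_Icc_zero_iff_right.2 (Ico_subset_Icc_self ht)) hv0)
    (HasDerivWithinAt.continuousOn hv) (fun t ht => ?_) (fun t ht => ?_)
    (HasDerivWithinAt.continuousOn hw) (fun t ht => ?_) (fun t ht => ?_) hvw
  all_goals have ht' := Ico_subset_Icc_self ht
  · exact hasDerivWithinAt_Ici_of_Icc (hv t ht') ht
  · exact ⟨hM.initial_le_of_hasDerivWithinAt hv hv0 hv1 ht', hv1 t ht'⟩
  · exact hasDerivWithinAt_Ici_of_Icc (hw t ht') ht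
  · exact ⟨hvw ▸ hM.initial_le_of_hasDerivWithinAt hw (hvw ▸ hv0) hw1 ht', hw1 t ht'⟩

end IsPositiveRootBranch

/-- Let `T > 0`, `m₀ ∈ (0,1]`, and let `M(t,m)` be the root of the consistency
equation with the same sign as `m`: for `m > 0` it is the unique positive
solution of `t²M³ + t(2−t)M² + (1−2t)M = m`, `M(t,0) = 0`, and
`M(t,m) = −M(t,−m)` for `m < 0`. Let `Z(t,m) = 2M(t,m)/(t|M(t,m)|+1)` be the
entropy solution of the master equation. Then the initial value problem
`m′(t) = −m(t)|Z(T−t,m(t))| + Z(T−t,m(t))`, `m(0) = m₀`, has a unique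
differentiable solution `m : [0,T] → [−1,1]`, and it satisfies
`m(t) ≥ m₀ > 0` for all `t ∈ [0,T]`. -/
theorem stmt_14 (T m₀ : ℝ) (hT : 0 < T) (hm₀ : m₀ ∈ Set.Ioc (0:ℝ) 1)
    (M : ℝ → ℝ → ℝ)
    (hMpos : ∀ t ∈ Set.Icc (0:ℝ) T, ∀ m ∈ Set.Ioc (0:ℝ) 1,
      (0 < M t m ∧
        t^2 * (M t m)^3 + t*(2 - t) * (M t m)^2 + (1 - 2*t) * (M t m) = m) ∧
      (∀ M' : ℝ, 0 < M' →
        t^2 * M'^3 + t*(2 - t) * M'^2 + (1 - 2*t) * M' = m → M' = M t m))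
    (hM0 : ∀ t ∈ Set.Icc (0:ℝ) T, M t 0 = 0)
    (hMneg : ∀ t ∈ Set.Icc (0:ℝ) T, ∀ m ∈ Set.Ico (-1:ℝ) 0, M t m = - M t (-m)) :
    let Z : ℝ → ℝ → ℝ := fun t m => 2 * M t m / (t * |M t m| + 1)
    ∃ m : ℝ → ℝ,
      (∀ t ∈ Set.Icc (0:ℝ) T, m t ∈ Set.Icc (-1:ℝ) 1) ∧
      (∀ t ∈ Set.Icc (0:ℝ) T,
        HasDerivWithinAt m (-(m t) * |Z (T - t) (m t)| + Z (T - t) (m t))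
          (Set.Icc (0:ℝ) T) t) ∧
      m 0 = m₀ ∧
      (∀ t ∈ Set.Icc (0:ℝ) T, m₀ ≤ m t) ∧
      (∀ w : ℝ → ℝ,
        (∀ t ∈ Set.Icc (0:ℝ) T, w t ∈ Set.Icc (-1:ℝ) 1) →
        (∀ t ∈ Set.Icc (0:ℝ) T,
          HasDerivWithinAt w (-(w t) * |Z (T - t) (w t)| + Z (T - t) (w t))
            (Set.Icc (0:ℝ) T) t) →
        w 0 = m₀ → Set.EqOn w m (Set.Icc 0 T)) := by
  intro Z
  have hM : IsPositiveRootBranch T M := fun t ht m hm =>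
    ⟨(hMpos t ht m hm).1.1, (consistencyMap_eq_cubic _ _).trans (hMpos t ht m hm).1.2⟩
  have hT' : T ∈ Icc 0 T := right_mem_Icc.2 hT.le
  have hp : M T m₀ ∈ Ioc (0 : ℝ) 1 := hM.apply_mem_Ioc hT' hm₀
  let m : ℝ → ℝ := fun t => consistencyMap (T - t) (M T m₀)
  have m_zero : m 0 = m₀ := by simpa [m] using (hM T hT' m₀ hm₀).2
  have le_m : ∀ t ∈ Icc 0 T, m₀ ≤ m t := fun t ht =>
    m_zero.symm.trans_le <| antitoneOn_consistencyMap_left (Ioc_subset_Icc_self hp)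
      (sub_nonneg.2 ht.2) (sub_nonneg.2 hT.le) (sub_le_sub_left ht.1 T)
  have m_le_one : ∀ t ∈ Icc 0 T, m t ≤ 1 := fun _ _ => consistencyMap_le_one hp.2
  have m_deriv : ∀ t ∈ Icc 0 T,
      HasDerivWithinAt m (meanFieldDrift M (T - t) (m t)) (Icc 0 T) t := fun t ht =>
    (hM.hasDerivAt_characteristic ht hp (hm₀.1.trans_le (le_m t ht))).hasDerivWithinAt
  refine ⟨m, fun t ht => ⟨by linarith [hm₀.1, le_m t ht], m_le_one t ht⟩, m_deriv, m_zero, le_m,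
    fun w w_mem w_deriv w_zero => ?_⟩
  exact hM.eqOn_of_hasDerivWithinAt w_deriv m_deriv (fun t ht => (w_mem t ht).2) m_le_one
    (w_zero ▸ hm₀.1) (w_zero.trans m_zero.symm)
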